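/- Let n ≥ 1, −1/n < α < 0, κ = α/(1 + nα), 0 < λ < 1, and let f, g ∈ C_α(ℝⁿ) be Lebesgue integrable with ∫f > 0 and ∫g > 0. Define h(x) = sup_{y+z=x} [λ·f(y/λ)^α + (1−λ)·g(z/(1−λ))^α]^{1/α} (conventions 0^α = +∞ and (+∞)^{1/α} = 0). Then ∫_{ℝⁿ} h(x) dx ≥ [λ·(∫f)^κ + (1−λ)·(∫g)^κ]^{1/κ} (note κ < 0). -/

import Mathlib

open scoped RealInnerProductSpace Topology ENNReal
open MeasureTheory Filter

noncomputable section

/-- `f : ℝⁿ → [0,∞)` is `α`-concave: its support is convex and `f` satisfies the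
`α`-mean inequality on its support. -/
def AlphaConcave (n : ℕ) (α : ℝ) (f : EuclideanSpace ℝ (Fin n) → ℝ) : Prop :=
  Convex ℝ {x | f x ≠ 0} ∧
  ∀ x y : EuclideanSpace ℝ (Fin n), f x ≠ 0 → f y ≠ 0 → ∀ l : ℝ, 0 ≤ l → l ≤ 1 →
    (l * f x ^ α + (1 - l) * f y ^ α) ^ (1 / α) ≤ f (l • x + (1 - l) • y)

/-- `C_α(ℝⁿ)`: upper semicontinuous `α`-concave functions `f : ℝⁿ → [0,∞)`
with `f` not identically `0`. -/
def CAlpha (n : ℕ) (α : ℝ) : Set (EuclideanSpace ℝ (Fin n) → ℝ) :=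
  {f | (∀ x, 0 ≤ f x) ∧ UpperSemicontinuous f ∧ (∃ x, f x ≠ 0) ∧ AlphaConcave n α f}

/-- The convex base `base_α f = (1 - f^α)/α = β·(f^{-1/β} - 1)` (with `α = -1/β`),
taking the value `∞` where `f = 0`. -/
def convexBase {n : ℕ} (β : ℝ) (f : EuclideanSpace ℝ (Fin n) → ℝ) :
    EuclideanSpace ℝ (Fin n) → EReal :=
  fun x => if f x = 0 then ⊤ else ((β * (f x ^ (-1 / β) - 1) : ℝ) : EReal)

/-- The `α`-concave function with the given convex base: `f = (1 + φ/β)^{-β}`. -/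
def ofBase {n : ℕ} (β : ℝ) (φ : EuclideanSpace ℝ (Fin n) → EReal) :
    EuclideanSpace ℝ (Fin n) → ℝ :=
  fun x => if φ x = ⊤ then 0 else (1 + (φ x).toReal / β) ^ (-β)

/-- Inf-convolution: `(φ □ ψ)(x) = inf_{y+z=x} [φ(y) + ψ(z)]`. -/
def infConv {n : ℕ} (φ ψ : EuclideanSpace ℝ (Fin n) → EReal) :
    EuclideanSpace ℝ (Fin n) → EReal :=
  fun x => ⨅ y : EuclideanSpace ℝ (Fin n), φ y + ψ (x - y)

/-- The base of the `λ`-homothety: `x ↦ λ·φ(x/λ)`. -/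
def scaleBase {n : ℕ} (l : ℝ) (φ : EuclideanSpace ℝ (Fin n) → EReal) :
    EuclideanSpace ℝ (Fin n) → EReal :=
  fun x => (l : EReal) * φ (l⁻¹ • x)

/-- `base_α G_α`, i.e. the function `x ↦ |x|²/2`. -/
def gaussBase (n : ℕ) : EuclideanSpace ℝ (Fin n) → EReal :=
  fun x => ((‖x‖ ^ 2 / 2 : ℝ) : EReal)

/-- The Legendre transform `φ*(y) = sup_x (⟨x,y⟩ - φ(x))`. -/
def legendre {n : ℕ} (φ : EuclideanSpace ℝ (Fin n) → EReal) :
    EuclideanSpace ℝ (Fin n) → EReal :=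
  fun y => ⨆ x : EuclideanSpace ℝ (Fin n), (((⟪x, y⟫ : ℝ) : EReal) - φ x)

/-- The `α`-mean `[l·u^α + (1-l)·v^α]^{1/α}` with the conventions `0^α = +∞`,
`(+∞)^{1/α} = 0` (for `α < 0`). -/
def alphaMean (α l u v : ℝ) : ℝ :=
  if u = 0 ∨ v = 0 then 0 else (l * u ^ α + (1 - l) * v ^ α) ^ (1 / α)

/-! On the line, the Borell–Brascamp–Lieb inequality is Brunn–Minkowski for superlevel sets: if `f`
and `g` are truncated at finite heights `A ≤ sup f` and `B ≤ sup g`, both level sets `{f ≥ A t}` and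
`{g ≥ B t}` are nonempty for every `t < 1`, and integrating over `t` leaves a two-term Hölder
inequality. The exponents `p / (1 + d p)` compose under products, so Fubini gives all dimensions.
Approximation of `f` and `g` from below by upper semicontinuous functions makes their supremal
convolution measurable.

A real-valued supremum is meaningful only if it is bounded, and `α`-concavity provides the bound: if
`f x` is large, contracting a superlevel set `{f ≥ c}` towards `x` by the ratio `(f x / c) ^ α` puts
it inside `{f ≥ 2 ^ (1 / α) * f x}`, and since `1 + n α > 0` this bounds `f x` by `∫ f`. -/

theorem add_rpow_mul_rpow_le {θ : ℝ} (h₀ : 0 ≤ θ) (h₁ : θ ≤ 1) (x₁ x₂ y₁ y₂ : ℝ≥0∞) :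
    x₁ ^ θ * y₁ ^ (1 - θ) + x₂ ^ θ * y₂ ^ (1 - θ) ≤ (x₁ + x₂) ^ θ * (y₁ + y₂) ^ (1 - θ) := by
  simpa [lintegral_count, tsum_fintype, Fin.sum_univ_two] using
    ENNReal.lintegral_mul_norm_pow_le (μ := .count) (f := ![x₁, x₂]) (g := ![y₁, y₂])
      (measurable_of_finite _).aemeasurable (measurable_of_finite _).aemeasurable h₀
      (sub_nonneg.2 h₁) (add_sub_cancel _ _)

theorem antitone_ennreal_rpow {p : ℝ} (hp : p ≤ 0) : Antitone fun u : ℝ≥0∞ ↦ u ^ p := by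
  intro u v huv
  simpa only [ENNReal.inv_rpow, ← ENNReal.rpow_neg, neg_neg] using
    ENNReal.rpow_le_rpow (ENNReal.inv_le_inv.2 huv) (neg_nonneg.2 hp)

theorem ennreal_mul_rpow {c : ℝ≥0∞} (hc₀ : c ≠ 0) (hc : c ≠ ⊤) (u : ℝ≥0∞) (p : ℝ) :
    (c * u) ^ p = c ^ p * u ^ p := by
  simp [ENNReal.mul_rpow_eq_ite, hc₀, hc]

/-- The weighted power mean of `u` and `v` with exponent `p`, used for `p < 0`. The weights need not
sum to `1`. In `ℝ≥0∞` the conventions `0 ^ p = ∞` and `∞ ^ p = 0` are automatic for `p < 0`. -/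
def powerMean (a b : ℝ≥0∞) (p : ℝ) (u v : ℝ≥0∞) : ℝ≥0∞ :=
  (a * u ^ p + b * v ^ p) ^ p⁻¹

section PowerMean

variable {a b : ℝ≥0∞} {p q : ℝ} {u v : ℝ≥0∞}

theorem powerMean_mono (hp : p ≤ 0) {u' v' : ℝ≥0∞} (hu : u ≤ u') (hv : v ≤ v') :
    powerMean a b p u v ≤ powerMean a b p u' v' :=
  antitone_ennreal_rpow (inv_nonpos.2 hp) <|
    add_le_add (mul_le_mul_right (antitone_ennreal_rpow hp hu) a)
      (mul_le_mul_right (antitone_ennreal_rpow hp hv) b)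

theorem continuous_powerMean (ha : a ≠ ⊤) (hb : b ≠ ⊤) (p : ℝ) :
    Continuous fun w : ℝ≥0∞ × ℝ≥0∞ ↦ powerMean a b p w.1 w.2 :=
  ENNReal.continuous_rpow_const.comp <|
    ((ENNReal.continuous_const_mul ha).comp (ENNReal.continuous_rpow_const.comp continuous_fst)).add
      ((ENNReal.continuous_const_mul hb).comp (ENNReal.continuous_rpow_const.comp continuous_snd))

theorem powerMean_zero_left (ha : a ≠ 0) (hp : p < 0) : powerMean a b p 0 v = 0 := by
  rw [powerMean, ENNReal.zero_rpow_of_neg hp, ENNReal.mul_top ha, top_add,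
    ENNReal.top_rpow_of_neg (inv_lt_zero.2 hp)]

theorem powerMean_zero_right (hb : b ≠ 0) (hp : p < 0) : powerMean a b p u 0 = 0 := by
  rw [powerMean, ENNReal.zero_rpow_of_neg hp, ENNReal.mul_top hb, add_top,
    ENNReal.top_rpow_of_neg (inv_lt_zero.2 hp)]

theorem powerMean_ne_zero (ha : a ≠ ⊤) (hb : b ≠ ⊤) (hp : p < 0) (hu : u ≠ 0) (hv : v ≠ 0) :
    powerMean a b p u v ≠ 0 := by
  simp [powerMean, ENNReal.rpow_eq_zero_iff, ENNReal.mul_eq_top, ENNReal.rpow_eq_top_iff, ha, hb,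
    hu, hv, hp, hp.not_gt]

theorem powerMean_ne_top (ha : a ≠ 0) (hp : p < 0) (hu : u ≠ ⊤) :
    powerMean a b p u v ≠ ⊤ := by
  simp [powerMean, ENNReal.rpow_eq_zero_iff, ENNReal.mul_eq_top, ENNReal.rpow_eq_top_iff, ha,
    hu, hp, hp.not_gt]

theorem powerMean_mul_left {c : ℝ≥0∞} (hc₀ : c ≠ 0) (hc : c ≠ ⊤) (hp : p ≠ 0) :
    powerMean a b p (c * u) (c * v) = c * powerMean a b p u v := by
  have hcp₀ : c ^ p ≠ 0 := by simp [ENNReal.rpow_eq_zero_iff, hc₀, hc]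
  have hcp : c ^ p ≠ ⊤ := by simp [ENNReal.rpow_eq_top_iff, hc₀, hc]
  rw [powerMean, ennreal_mul_rpow hc₀ hc, ennreal_mul_rpow hc₀ hc, mul_left_comm a,
    mul_left_comm b, ← mul_add, ennreal_mul_rpow hcp₀ hcp, ENNReal.rpow_rpow_inv hp, powerMean]

theorem powerMean_ofReal {a b u v : ℝ} (ha : 0 < a) (hb : 0 < b) (hu : 0 < u) (hv : 0 < v) :
    powerMean (.ofReal a) (.ofReal b) p (.ofReal u) (.ofReal v) =
      .ofReal ((a * u ^ p + b * v ^ p) ^ p⁻¹) := by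
  rw [powerMean, ENNReal.ofReal_rpow_of_pos hu, ENNReal.ofReal_rpow_of_pos hv,
    ← ENNReal.ofReal_mul ha.le, ← ENNReal.ofReal_mul hb.le,
    ← ENNReal.ofReal_add (by positivity) (by positivity),
    ENNReal.ofReal_rpow_of_pos (by positivity)]

theorem add_mul_rpow_le (hq : -1 < q) (hq' : q < 0) {A B : ℝ≥0∞}
    (hu₀ : u ≠ 0) (hu : u ≠ ⊤) (hv₀ : v ≠ 0) (hv : v ≠ ⊤) :
    a * A ^ q + b * B ^ q ≤
      (a * (A * u) ^ (q / (1 + q)) + b * (B * v) ^ (q / (1 + q))) ^ (1 + q) *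
        (a * u + b * v) ^ (-q) := by
  have h₁q : 0 < 1 + q := by linarith
  have split_term (c C w : ℝ≥0∞) (hw₀ : w ≠ 0) (hw : w ≠ ⊤) :
      (c * (C * w) ^ (q / (1 + q))) ^ (1 + q) * (c * w) ^ (-q) = c * C ^ q := by
    rw [ENNReal.mul_rpow_of_nonneg _ _ h₁q.le, ENNReal.mul_rpow_of_nonneg _ _ (neg_pos.2 hq').le,
      mul_mul_mul_comm, ← ENNReal.rpow_add_of_nonneg _ _ h₁q.le (neg_pos.2 hq').le,
      ← ENNReal.rpow_mul, div_mul_cancel₀ _ h₁q.ne', mul_comm C, ennreal_mul_rpow hw₀ hw,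
      mul_right_comm, ← ENNReal.rpow_add _ _ hw₀ hw]
    simp
  have holder := add_rpow_mul_rpow_le h₁q.le (by linarith) (a * (A * u) ^ (q / (1 + q)))
    (b * (B * v) ^ (q / (1 + q))) (a * u) (b * v)
  rwa [show 1 - (1 + q) = -q by ring, split_term a A u hu₀ hu, split_term b B v hv₀ hv] at holder

theorem powerMean_mul_le (ha : a ≠ 0) (ha' : a ≠ ⊤) (hb : b ≠ 0) (hb' : b ≠ ⊤)
    (hq : -1 < q) (hq' : q < 0) {A B : ℝ≥0∞} :
    powerMean a b (q / (1 + q)) (A * u) (B * v) ≤ powerMean a b q A B * (a * u + b * v) := by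
  have h₁q : 0 < 1 + q := by linarith
  have hs : q / (1 + q) < 0 := div_neg_of_neg_of_pos hq' h₁q
  rcases eq_or_ne (A * u) 0 with hAu | hAu
  · rw [hAu, powerMean_zero_left ha hs]; exact zero_le
  rcases eq_or_ne (B * v) 0 with hBv | hBv
  · rw [hBv, powerMean_zero_right hb hs]; exact zero_le
  obtain ⟨hA₀, hu₀⟩ := mul_ne_zero_iff.1 hAu
  obtain ⟨hB₀, hv₀⟩ := mul_ne_zero_iff.1 hBv
  set X := a * u + b * v with hX
  have hX₀ : X ≠ 0 := by simp [hX, ha, hu₀]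
  rcases eq_or_ne X ⊤ with hX' | hX'
  · rw [hX', ENNReal.mul_top (powerMean_ne_zero ha' hb' hq' hA₀ hB₀)]; exact le_top
  obtain ⟨hu, hv⟩ : u ≠ ⊤ ∧ v ≠ ⊤ := by
    simpa [hX, ENNReal.mul_eq_top, ha, ha', hb, hb'] using hX'
  set T := a * (A * u) ^ (q / (1 + q)) + b * (B * v) ^ (q / (1 + q))
  have hXq : (X ^ (-q)) ^ q⁻¹ = X⁻¹ := by
    rw [← ENNReal.rpow_mul, neg_mul, mul_inv_cancel₀ hq'.ne, ENNReal.rpow_neg_one]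
  calc T ^ (q / (1 + q))⁻¹
      = X⁻¹ * T ^ ((1 + q) * q⁻¹) * X := by
        rw [mul_right_comm, ENNReal.inv_mul_cancel hX₀ hX', one_mul, inv_div, div_eq_mul_inv]
    _ = (X ^ (-q) * T ^ (1 + q)) ^ q⁻¹ * X := by
        rw [ennreal_mul_rpow (by simp [ENNReal.rpow_eq_zero_iff, hX₀, hX'])
          (by simp [ENNReal.rpow_eq_top_iff, hX₀, hX']), hXq, ENNReal.rpow_mul]
    _ ≤ powerMean a b q A B * X := by
        rw [mul_comm (X ^ (-q))]
        exact mul_le_mul_left (antitone_ennreal_rpow (inv_lt_zero.2 hq').le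
          (add_mul_rpow_le hq hq' hu₀ hu hv₀ hv)) X

end PowerMean

open Pointwise in
theorem real_volume_add_le_of_isCompact {K L : Set ℝ} (hK : IsCompact K) (hL : IsCompact L)
    (hK₀ : K.Nonempty) (hL₀ : L.Nonempty) : volume K + volume L ≤ volume (K + L) := by
  obtain ⟨k, hk, hkK⟩ := hK.exists_isGreatest hK₀
  obtain ⟨m, hm, hmL⟩ := hL.exists_isLeast hL₀
  have overlap : (K + {m}) ∩ ({k} + L) ⊆ {k + m} := by
    rintro _ ⟨⟨x, hx, _, rfl, rfl⟩, _, rfl, y, hy, hxy⟩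
    have := hkK hx
    have := hmL hy
    simp only [Set.mem_singleton_iff] at *
    linarith
  calc volume K + volume L = volume (K + {m}) + volume ({k} + L) := by simp
    _ = volume ((K + {m}) ∪ ({k} + L)) :=
      (measure_union₀ (isCompact_singleton.add hL).measurableSet.nullMeasurableSet
        (measure_mono_null overlap (by simp))).symm
    _ ≤ volume (K + L) := by
      gcongr
      exact Set.union_subset (Set.add_subset_add_left (Set.singleton_subset_iff.2 hm))
        (Set.add_subset_add_right (Set.singleton_subset_iff.2 hk))

open Pointwise in
theorem real_volume_add_le {A B : Set ℝ} (hA : MeasurableSet A) (hB : MeasurableSet B)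
    (hA₀ : A.Nonempty) (hB₀ : B.Nonempty) : volume A + volume B ≤ volume (A + B) := by
  obtain ⟨x, hx⟩ := hA₀
  obtain ⟨y, hy⟩ := hB₀
  rw [hA.measure_eq_iSup_isCompact volume, hB.measure_eq_iSup_isCompact volume]
  simp only [iSup_and']
  refine ENNReal.biSup_add_biSup_le' ⟨∅, by simp⟩ ⟨∅, by simp⟩ ?_
  rintro K ⟨hKA, hK⟩ L ⟨hLB, hL⟩
  calc volume K + volume L ≤ volume (insert x K) + volume (insert y L) := by
        gcongr <;> exact Set.subset_insert _ _
    _ ≤ volume (insert x K + insert y L) := real_volume_add_le_of_isCompact (hK.insert x)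
        (hL.insert y) (Set.insert_nonempty _ _) (Set.insert_nonempty _ _)
    _ ≤ volume (A + B) := by
        gcongr
        · exact Set.insert_subset hx hKA
        · exact Set.insert_subset hy hLB

theorem min_eq_mul_volume_setOf_mul_le {A : ℝ≥0∞} (hA : A ≠ ⊤) (y : ℝ≥0∞) :
    min y A = A * volume ({t : ℝ | A * .ofReal t ≤ y} ∩ Set.Ioo 0 1) := by
  rcases eq_or_ne A 0 with rfl | hA₀
  · simp
  rcases le_or_gt A y with hAy | hAy
  · have : Set.Ioo (0 : ℝ) 1 ⊆ {t : ℝ | A * .ofReal t ≤ y} := fun t ht ↦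
      (mul_le_of_le_one_right' (ENNReal.ofReal_le_one.2 ht.2.le)).trans hAy
    simp [Set.inter_eq_right.2 this, hAy]
  · have hr : y / A < 1 := (ENNReal.div_lt_iff (.inl hA₀) (.inl hA)).2 (by simpa using hAy)
    have : {t : ℝ | A * .ofReal t ≤ y} ∩ Set.Ioo 0 1 = Set.Ioc 0 (y / A).toReal := by
      ext t
      have hr' : (y / A).toReal < 1 := by
        simpa using (ENNReal.toReal_lt_toReal hr.ne_top ENNReal.one_ne_top).2 hr
      simp only [Set.mem_inter_iff, Set.mem_ofPred_eq, Set.mem_Ioo, Set.mem_Ioc,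
        mul_comm A, ← ENNReal.le_div_iff_mul_le (.inl hA₀) (.inl hA),
        ENNReal.ofReal_le_iff_le_toReal hr.ne_top]
      grind
    rw [this, Real.volume_Ioc, sub_zero, ENNReal.ofReal_toReal hr.ne_top,
      ENNReal.mul_div_cancel hA₀ hA, min_eq_left hAy.le]

theorem lintegral_min_eq_mul_lintegral_meas_le {X : Type*} [MeasurableSpace X] (μ : Measure X)
    [SFinite μ] {f : X → ℝ≥0∞} (hf : Measurable f) {A : ℝ≥0∞} (hA : A ≠ ⊤) :
    ∫⁻ x, min (f x) A ∂μ = A * ∫⁻ t in Set.Ioo 0 1, μ {x | A * .ofReal t ≤ f x} := by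
  have hS : MeasurableSet {z : ℝ × X | A * .ofReal z.1 ≤ f z.2} :=
    measurableSet_le (by fun_prop) (by fun_prop)
  have swap := Measure.prod_apply_symm (μ := volume.restrict (Set.Ioo 0 1)) (ν := μ) hS
  rw [Measure.prod_apply hS] at swap
  simp_rw [min_eq_mul_volume_setOf_mul_le hA]
  rw [lintegral_const_mul' _ _ hA]
  refine congrArg (A * ·) (Eq.trans ?_ swap.symm)
  refine lintegral_congr fun x ↦ ?_
  rw [Measure.restrict_apply (measurable_prodMk_right hS)]
  rfl

open Pointwise in
theorem volume_superlevel_add_le {a b : ℝ} (ha : 0 < a) (hb : 0 < b) {q : ℝ} (hq' : q < 0)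
    {f g h : ℝ → ℝ≥0∞} (hf : Measurable f) (hg : Measurable g)
    (hfgh : ∀ x y, powerMean (.ofReal a) (.ofReal b) q (f x) (g y) ≤ h (a • x + b • y))
    {A B : ℝ≥0∞} (hA : A ≠ ⊤) (hAf : A ≤ ⨆ x, f x) (hB : B ≠ ⊤) (hBg : B ≤ ⨆ x, g x)
    {t : ℝ} (ht₀ : 0 < t) (ht₁ : t < 1) :
    .ofReal a * volume {x | A * .ofReal t ≤ f x} + .ofReal b * volume {x | B * .ofReal t ≤ g x} ≤
      volume {x | powerMean (.ofReal a) (.ofReal b) q A B * .ofReal t ≤ h x} := by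
  have nonempty {φ : ℝ → ℝ≥0∞} {C : ℝ≥0∞} (hC : C ≠ ⊤) (hCφ : C ≤ ⨆ x, φ x) :
      {x | C * .ofReal t ≤ φ x}.Nonempty := by
    rcases eq_or_ne C 0 with rfl | hC₀
    · exact ⟨0, by simp⟩
    have : C * .ofReal t < C := by
      simpa using (ENNReal.mul_lt_mul_iff_right hC₀ hC).2 (ENNReal.ofReal_lt_one.2 ht₁)
    exact (lt_iSup_iff.1 (this.trans_le hCφ)).imp fun _ ↦ le_of_lt
  have volume_smul {c : ℝ} (hc : 0 < c) (S : Set ℝ) : volume (c • S) = .ofReal c * volume S := by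
    simp [Measure.addHaar_smul, abs_of_pos hc]
  rw [← volume_smul ha, ← volume_smul hb]
  refine (real_volume_add_le ((measurableSet_le measurable_const hf).const_smul₀ a)
    ((measurableSet_le measurable_const hg).const_smul₀ b)
    (nonempty hA hAf).smul_set (nonempty hB hBg).smul_set).trans (measure_mono ?_)
  rintro _ ⟨_, ⟨x, hx, rfl⟩, _, ⟨y, hy, rfl⟩, rfl⟩
  calc powerMean (.ofReal a) (.ofReal b) q A B * .ofReal t
      = powerMean (.ofReal a) (.ofReal b) q (A * .ofReal t) (B * .ofReal t) := by
        simp_rw [mul_comm _ (ENNReal.ofReal t)]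
        exact (powerMean_mul_left (by simpa) ENNReal.ofReal_ne_top hq'.ne).symm
    _ ≤ powerMean (.ofReal a) (.ofReal b) q (f x) (g y) := powerMean_mono hq'.le hx hy
    _ ≤ h (a • x + b • y) := hfgh x y

theorem powerMean_lintegral_min_le {a b : ℝ} (ha : 0 < a) (hb : 0 < b) {q : ℝ} (hq : -1 < q)
    (hq' : q < 0) {f g h : ℝ → ℝ≥0∞} (hf : Measurable f) (hg : Measurable g) (hh : Measurable h)
    (hfgh : ∀ x y, powerMean (.ofReal a) (.ofReal b) q (f x) (g y) ≤ h (a • x + b • y))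
    {A B : ℝ≥0∞} (hA : A ≠ ⊤) (hAf : A ≤ ⨆ x, f x) (hB : B ≠ ⊤) (hBg : B ≤ ⨆ x, g x) :
    powerMean (.ofReal a) (.ofReal b) (q / (1 + q)) (∫⁻ x, min (f x) A) (∫⁻ x, min (g x) B) ≤
      ∫⁻ x, h x := by
  have ha₀ : ENNReal.ofReal a ≠ 0 := by simpa
  have hb₀ : ENNReal.ofReal b ≠ 0 := by simpa
  have measurable_meas (φ : ℝ → ℝ≥0∞) (C : ℝ≥0∞) :
      Measurable fun t : ℝ ↦ volume {x | C * .ofReal t ≤ φ x} :=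
    Antitone.measurable fun s t hst ↦ measure_mono fun x hx ↦
      (mul_le_mul_right (ENNReal.ofReal_le_ofReal hst) C).trans hx
  set m := powerMean (.ofReal a) (.ofReal b) q A B
  have hm : m ≠ ⊤ := powerMean_ne_top ha₀ hq' hA
  rw [lintegral_min_eq_mul_lintegral_meas_le volume hf hA,
    lintegral_min_eq_mul_lintegral_meas_le volume hg hB]
  refine (powerMean_mul_le ha₀ ENNReal.ofReal_ne_top hb₀ ENNReal.ofReal_ne_top hq hq').trans ?_
  calc m * (.ofReal a * (∫⁻ t in Set.Ioo 0 1, volume {x | A * .ofReal t ≤ f x}) +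
        .ofReal b * ∫⁻ t in Set.Ioo 0 1, volume {x | B * .ofReal t ≤ g x})
      ≤ m * ∫⁻ t in Set.Ioo 0 1, volume {x | m * .ofReal t ≤ h x} := by
        rw [← lintegral_const_mul _ (measurable_meas f A),
          ← lintegral_const_mul _ (measurable_meas g B),
          ← lintegral_add_left ((measurable_meas f A).const_mul _)]
        refine mul_le_mul_right ?_ m
        exact setLIntegral_mono' measurableSet_Ioo fun t ht ↦
          volume_superlevel_add_le ha hb hq' hf hg hfgh hA hAf hB hBg ht.1 ht.2
    _ = ∫⁻ x, min (h x) m := (lintegral_min_eq_mul_lintegral_meas_le volume hh hm).symm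
    _ ≤ ∫⁻ x, h x := lintegral_mono fun x ↦ min_le_left _ _

theorem tendsto_lintegral_min_natCast {X : Type*} [MeasurableSpace X] (μ : Measure X)
    {f : X → ℝ≥0∞} (hf : Measurable f) :
    Tendsto (fun N : ℕ ↦ ∫⁻ x, min (f x) N ∂μ) atTop (𝓝 (∫⁻ x, f x ∂μ)) := by
  refine lintegral_tendsto_of_tendsto_of_monotone
    (fun N ↦ (hf.min measurable_const).aemeasurable)
    (.of_forall fun x M N hMN ↦ min_le_min_left _ (Nat.cast_le.2 hMN)) (.of_forall fun x ↦ ?_)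
  simpa using (tendsto_const_nhds (x := f x)).min ENNReal.tendsto_nat_nhds_top

/-- The Borell–Brascamp–Lieb inequality in dimension `d` for the measure `μ`, with weights `a`, `b`
and all exponents `-1 / d < p < 0`. The bound on `p` is written `0 < 1 + d * p` so that it makes
sense for `d = 0`, and `h` is assumed measurable so that the inequality passes to products. -/
def HasBorellBrascampLieb {E : Type*} [AddCommGroup E] [Module ℝ E] [MeasurableSpace E] (a b : ℝ)
    (μ : Measure E) (d : ℕ) : Prop :=
  ∀ p : ℝ, p < 0 → 0 < 1 + d * p → ∀ f g h : E → ℝ≥0∞,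
    Measurable f → Measurable g → Measurable h →
    (∀ x y, powerMean (.ofReal a) (.ofReal b) p (f x) (g y) ≤ h (a • x + b • y)) →
    powerMean (.ofReal a) (.ofReal b) (p / (1 + d * p)) (∫⁻ x, f x ∂μ) (∫⁻ x, g x ∂μ) ≤
      ∫⁻ x, h x ∂μ

namespace HasBorellBrascampLieb

variable {E F : Type*} [AddCommGroup E] [Module ℝ E] [MeasurableSpace E]
  [AddCommGroup F] [Module ℝ F] [MeasurableSpace F] {a b : ℝ} {μ : Measure E} {ν : Measure F}
  {d e : ℕ}

theorem volume_real (ha : 0 < a) (hb : 0 < b) :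
    HasBorellBrascampLieb a b (volume : Measure ℝ) 1 := by
  intro p hp hdp f g h hf hg hh hfgh
  rw [Nat.cast_one, one_mul] at hdp ⊢
  have cap (φ : ℝ → ℝ≥0∞) (N : ℕ) (x : ℝ) : min (φ x) (min (⨆ x, φ x) N) = min (φ x) N := by
    rw [← min_assoc, min_eq_left (le_iSup φ x)]
  have truncated (N : ℕ) := powerMean_lintegral_min_le ha hb (by linarith) hp hf hg hh hfgh
    (ne_top_of_le_ne_top (ENNReal.natCast_ne_top N) (min_le_right _ _)) (min_le_left _ _)
    (ne_top_of_le_ne_top (ENNReal.natCast_ne_top N) (min_le_right _ _)) (min_le_left _ _)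
  simp only [cap] at truncated
  exact le_of_tendsto'
    (((continuous_powerMean ENNReal.ofReal_ne_top ENNReal.ofReal_ne_top _).tendsto _).comp
      ((tendsto_lintegral_min_natCast volume hf).prodMk_nhds
        (tendsto_lintegral_min_natCast volume hg))) truncated

theorem dirac_zero :
    HasBorellBrascampLieb a b (Measure.dirac (0 : E)) 0 := by
  intro p _ _ f g h hf hg hh hfgh
  simpa [lintegral_dirac' _ hf, lintegral_dirac' _ hg, lintegral_dirac' _ hh] using hfgh 0 0

theorem prod [SFinite ν] (hμ : HasBorellBrascampLieb a b μ d) (hν : HasBorellBrascampLieb a b ν e) :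
    HasBorellBrascampLieb a b (μ.prod ν) (d + e) := by
  intro p hp hdep f g h hf hg hh hfgh
  push_cast at hdep ⊢
  have hep : 0 < 1 + e * p := by nlinarith [mul_nonneg d.cast_nonneg (neg_pos.2 hp).le]
  have exponent : 1 + d * (p / (1 + e * p)) = (1 + (d + e) * p) / (1 + e * p) := by
    rw [eq_div_iff hep.ne', add_mul, mul_assoc, div_mul_cancel₀ _ hep.ne']; ring
  rw [lintegral_prod _ hf.aemeasurable, lintegral_prod _ hg.aemeasurable,
    lintegral_prod _ hh.aemeasurable]
  have := hμ (p / (1 + e * p)) (div_neg_of_neg_of_pos hp hep) (exponent ▸ div_pos hdep hep)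
    _ _ _ hf.lintegral_prod_right' hg.lintegral_prod_right' hh.lintegral_prod_right' fun s t ↦
      hν p hp hep _ _ _ (hf.comp measurable_prodMk_left) (hg.comp measurable_prodMk_left)
        (hh.comp measurable_prodMk_left) fun x y ↦ hfgh (s, x) (t, y)
  rwa [exponent, div_div_div_cancel_right₀ hep.ne'] at this

theorem map (hμ : HasBorellBrascampLieb a b μ d) (L : E →ₗ[ℝ] F) (hL : Measurable L) :
    HasBorellBrascampLieb a b (μ.map L) d := by
  intro p hp hdp f g h hf hg hh hfgh
  rw [lintegral_map hf hL, lintegral_map hg hL, lintegral_map hh hL]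
  exact hμ p hp hdp _ _ _ (hf.comp hL) (hg.comp hL) (hh.comp hL) fun x y ↦ by
    simpa using hfgh (L x) (L y)

theorem smul (hμ : HasBorellBrascampLieb a b μ d) {c : NNReal} (hc : c ≠ 0) :
    HasBorellBrascampLieb a b (c • μ) d := by
  intro p hp hdp f g h hf hg hh hfgh
  simp only [lintegral_smul_measure, ENNReal.smul_def, smul_eq_mul]
  rw [powerMean_mul_left (by simpa) ENNReal.coe_ne_top (div_neg_of_neg_of_pos hp hdp).ne]
  exact mul_le_mul_right (hμ p hp hdp f g h hf hg hh hfgh) _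

end HasBorellBrascampLieb

section Haar

variable {E F : Type*} [NormedAddCommGroup E] [NormedSpace ℝ E] [MeasurableSpace E]
  [BorelSpace E] [NormedAddCommGroup F] [NormedSpace ℝ F]
  [FiniteDimensional ℝ F] [MeasurableSpace F] [BorelSpace F] {a b : ℝ}

theorem HasBorellBrascampLieb.of_continuousLinearEquiv {μ : Measure E} [μ.IsAddHaarMeasure] {d : ℕ}
    (hμ : HasBorellBrascampLieb a b μ d) (L : E ≃L[ℝ] F) (ν : Measure F) [ν.IsAddHaarMeasure] :
    HasBorellBrascampLieb a b ν d := by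
  have := hμ.map (L : E →ₗ[ℝ] F) L.continuous.measurable
  rw [Measure.isAddLeftInvariant_eq_smul ν (μ.map L)]
  exact this.smul (Measure.addHaarScalarFactor_pos_of_isAddHaarMeasure _ _).ne'

theorem hasBorellBrascampLieb_volume_pi (ha : 0 < a) (hb : 0 < b) (n : ℕ) :
    HasBorellBrascampLieb a b (volume : Measure (Fin n → ℝ)) n := by
  induction n with
  | zero => rw [Measure.volume_pi_eq_dirac 0]; exact .dirac_zero
  | succ n ih =>
    rw [add_comm]
    exact ((HasBorellBrascampLieb.volume_real ha hb).prod ih).of_continuousLinearEquiv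
      (.ofFinrankEq (by simp [add_comm])) volume

theorem hasBorellBrascampLieb_addHaar (ha : 0 < a) (hb : 0 < b) (ν : Measure F)
    [ν.IsAddHaarMeasure] :
    HasBorellBrascampLieb a b ν (Module.finrank ℝ F) :=
  (hasBorellBrascampLieb_volume_pi ha hb _).of_continuousLinearEquiv (.ofFinrankEq (by simp)) ν

end Haar

section UpperSemicontinuous

variable {X Y L L' M : Type*} [TopologicalSpace X] [TopologicalSpace Y]
  [LinearOrder L] [TopologicalSpace L] [OrderTopology L]
  [LinearOrder L'] [TopologicalSpace L'] [OrderTopology L']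
  [LinearOrder M] [TopologicalSpace M] [OrderTopology M]

theorem tendsto_max_of_upperSemicontinuousAt {f : X → L} {x : X}
    (hf : UpperSemicontinuousAt f x) : Tendsto (fun x' ↦ max (f x') (f x)) (𝓝 x) (𝓝 (f x)) :=
  tendsto_order.2 ⟨fun _ hc ↦ .of_forall fun _ ↦ lt_max_of_lt_right hc,
    fun c hc ↦ (hf c hc).mono fun _ hx' ↦ max_lt hx' hc⟩

theorem upperSemicontinuous_prod_of_monotone {f : X → L} {g : Y → L'}
    (hf : UpperSemicontinuous f) (hg : UpperSemicontinuous g) {F : L × L' → M}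
    (hF : Continuous F) (hF' : Monotone F) :
    UpperSemicontinuous fun z : X × Y ↦ F (f z.1, g z.2) := by
  rintro ⟨x, y⟩ c hc
  have majorant : Tendsto (fun z : X × Y ↦ F (max (f z.1) (f x), max (g z.2) (g y))) (𝓝 (x, y))
      (𝓝 (F (f x, g y))) :=
    (hF.tendsto _).comp <|
      ((tendsto_max_of_upperSemicontinuousAt (hf x)).comp (continuous_fst.tendsto _)).prodMk_nhds
        ((tendsto_max_of_upperSemicontinuousAt (hg y)).comp (continuous_snd.tendsto _))
  exact (majorant.eventually_lt_const hc).mono fun z hz ↦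
    (hF' ⟨le_max_left _ _, le_max_left _ _⟩).trans_lt hz

theorem measurableSet_of_isSigmaCompact [T2Space Y] [MeasurableSpace Y] [OpensMeasurableSpace Y]
    {s : Set Y} (hs : IsSigmaCompact s) : MeasurableSet s := by
  obtain ⟨K, hK, rfl⟩ := hs
  exact .iUnion fun n ↦ (hK n).measurableSet

theorem measurable_iSup_fiber [SigmaCompactSpace X] [T2Space Y] [MeasurableSpace Y]
    [OpensMeasurableSpace Y] {N : Type*} [CompleteLinearOrder N] [DenselyOrdered N]
    [TopologicalSpace N] [OrderTopology N] [SecondCountableTopology N] [MeasurableSpace N]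
    [BorelSpace N] {π : X → Y} (hπ : Continuous π) {F : X → N} (hF : UpperSemicontinuous F) :
    Measurable fun y ↦ ⨆ x, ⨆ (_ : π x = y), F x := by
  refine measurable_of_Ioi fun c ↦ ?_
  obtain ⟨D, hD, hD'⟩ := TopologicalSpace.exists_countable_dense N
  have superlevel : (fun y ↦ ⨆ x, ⨆ (_ : π x = y), F x) ⁻¹' Set.Ioi c =
      π '' ⋃ q ∈ D ∩ Set.Ioi c, F ⁻¹' Set.Ici q := by
    ext y
    simp only [Set.mem_preimage, Set.mem_Ioi, lt_iSup_iff, Set.mem_image, Set.mem_iUnion₂,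
      Set.mem_Ici]
    constructor
    · rintro ⟨x, hx, hc⟩
      obtain ⟨q, hqD, hcq, hq⟩ := hD'.exists_between hc
      exact ⟨x, ⟨q, ⟨hqD, hcq⟩, hq.le⟩, hx⟩
    · rintro ⟨x, ⟨q, ⟨_, hcq⟩, hq⟩, hx⟩
      exact ⟨x, hx, hcq.trans_le hq⟩
  rw [superlevel]
  exact measurableSet_of_isSigmaCompact <| .image hπ <|
    isSigmaCompact_biUnion (hD.mono Set.inter_subset_left) fun q _ ↦
      isSigmaCompact_univ.of_isClosed_subset (hF.isClosed_preimage q) (Set.subset_univ _)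

end UpperSemicontinuous

section BorellBrascampLieb

theorem exists_seq_upperSemicontinuous_tendsto_lintegral {X : Type*} [TopologicalSpace X]
    [MeasurableSpace X] [BorelSpace X] {μ : Measure X} [μ.WeaklyRegular] {f : X → NNReal}
    (hf : ∫⁻ x, f x ∂μ ≠ ⊤) :
    ∃ φ : ℕ → X → NNReal, (∀ k, UpperSemicontinuous (φ k)) ∧ (∀ k x, φ k x ≤ f x) ∧
      Tendsto (fun k ↦ ∫⁻ x, φ k x ∂μ) atTop (𝓝 (∫⁻ x, f x ∂μ)) := by
  choose φ hφf hφ hfφ using fun k : ℕ ↦ exists_upperSemicontinuous_le_lintegral_le f hf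
    (ε := (k : ℝ≥0∞)⁻¹) (by simp)
  refine ⟨φ, hφ, hφf, tendsto_of_tendsto_of_tendsto_of_le_of_le
    (g := fun k : ℕ ↦ ∫⁻ x, f x ∂μ - (k : ℝ≥0∞)⁻¹) ?_ tendsto_const_nhds
    (fun k ↦ tsub_le_iff_right.2 (hfφ k))
    fun k ↦ lintegral_mono fun x ↦ ENNReal.coe_le_coe.2 (hφf k x)⟩
  simpa using ENNReal.Tendsto.sub (tendsto_const_nhds (x := ∫⁻ x, f x ∂μ))
    ENNReal.tendsto_inv_nat_nhds_zero (.inl hf)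

variable {E : Type*} [NormedAddCommGroup E] [NormedSpace ℝ E] [FiniteDimensional ℝ E]
  [MeasurableSpace E] [BorelSpace E] (μ : Measure E) [μ.IsAddHaarMeasure] {a b p : ℝ}

theorem powerMean_lintegral_le_of_upperSemicontinuous (ha : 0 < a) (hb : 0 < b) (hp : p < 0)
    (hdp : 0 < 1 + Module.finrank ℝ E * p) {f g h : E → ℝ≥0∞} (hf : UpperSemicontinuous f)
    (hg : UpperSemicontinuous g)
    (hfgh : ∀ x y, powerMean (.ofReal a) (.ofReal b) p (f x) (g y) ≤ h (a • x + b • y)) :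
    powerMean (.ofReal a) (.ofReal b) (p / (1 + Module.finrank ℝ E * p)) (∫⁻ x, f x ∂μ)
      (∫⁻ x, g x ∂μ) ≤ ∫⁻ x, h x ∂μ := by
  have := FiniteDimensional.proper_real E
  have usc : UpperSemicontinuous fun z : E × E ↦
      powerMean (.ofReal a) (.ofReal b) p (f z.1) (g z.2) :=
    upperSemicontinuous_prod_of_monotone hf hg
      (continuous_powerMean ENNReal.ofReal_ne_top ENNReal.ofReal_ne_top p)
      fun _ _ huv ↦ powerMean_mono hp.le huv.1 huv.2
  have hπ : Continuous fun z : E × E ↦ a • z.1 + b • z.2 := by fun_prop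
  refine (hasBorellBrascampLieb_addHaar ha hb μ p hp hdp f g _ hf.measurable hg.measurable
    (measurable_iSup_fiber hπ usc) fun x y ↦ ?_).trans (lintegral_mono fun z ↦ ?_)
  · exact le_iSup₂_of_le (x, y) rfl le_rfl
  · refine iSup₂_le ?_
    rintro ⟨x, y⟩ rfl
    exact hfgh x y

theorem powerMean_lintegral_le (ha : 0 < a) (hb : 0 < b) (hp : p < 0)
    (hdp : 0 < 1 + Module.finrank ℝ E * p) {f g : E → NNReal} {h : E → ℝ≥0∞}
    (hf : ∫⁻ x, f x ∂μ ≠ ⊤) (hg : ∫⁻ x, g x ∂μ ≠ ⊤)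
    (hfgh : ∀ x y, powerMean (.ofReal a) (.ofReal b) p (f x) (g y) ≤ h (a • x + b • y)) :
    powerMean (.ofReal a) (.ofReal b) (p / (1 + Module.finrank ℝ E * p)) (∫⁻ x, f x ∂μ)
      (∫⁻ x, g x ∂μ) ≤ ∫⁻ x, h x ∂μ := by
  have coe_usc {φ : E → NNReal} (hφ : UpperSemicontinuous φ) :
      UpperSemicontinuous fun x ↦ (φ x : ℝ≥0∞) :=
    ENNReal.continuous_coe.comp_upperSemicontinuous hφ ENNReal.coe_mono
  obtain ⟨φ, hφ, hφf, hφ'⟩ := exists_seq_upperSemicontinuous_tendsto_lintegral hf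
  obtain ⟨ψ, hψ, hψg, hψ'⟩ := exists_seq_upperSemicontinuous_tendsto_lintegral hg
  refine le_of_tendsto'
    (((continuous_powerMean ENNReal.ofReal_ne_top ENNReal.ofReal_ne_top _).tendsto _).comp
      (hφ'.prodMk_nhds hψ')) fun k ↦
    powerMean_lintegral_le_of_upperSemicontinuous μ ha hb hp hdp (coe_usc (hφ k))
      (coe_usc (hψ k)) fun x y ↦ ?_
  exact (powerMean_mono hp.le (ENNReal.coe_le_coe.2 (hφf k x))
    (ENNReal.coe_le_coe.2 (hψg k y))).trans (hfgh x y)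

end BorellBrascampLieb

section AlphaMean

variable {α l u v : ℝ}

theorem ofReal_alphaMean (hα : α < 0) (hl₀ : 0 < l) (hl₁ : l < 1) (hu : 0 ≤ u) (hv : 0 ≤ v) :
    ENNReal.ofReal (alphaMean α l u v) =
      powerMean (.ofReal l) (.ofReal (1 - l)) α (.ofReal u) (.ofReal v) := by
  have hl : 0 < 1 - l := sub_pos.2 hl₁
  rcases hu.eq_or_lt with rfl | hu
  · simp [alphaMean, powerMean_zero_left, hl₀, hα]
  rcases hv.eq_or_lt with rfl | hv
  · simp [alphaMean, powerMean_zero_right, hl₁, hα]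
  rw [powerMean_ofReal hl₀ hl hu hv, alphaMean, if_neg (by simp [hu.ne', hv.ne']), one_div]

theorem alphaMean_le (hα : α < 0) (hl₀ : 0 < l) (hl₁ : l < 1) (hu : 0 ≤ u) (hv : 0 ≤ v) :
    alphaMean α l u v ≤ l ^ (1 / α) * u := by
  rw [alphaMean]
  split_ifs with h
  · positivity
  have hu' : 0 < u := hu.lt_of_ne' fun h₀ ↦ h (.inl h₀)
  have : 0 ≤ (1 - l) * v ^ α := mul_nonneg (sub_pos.2 hl₁).le (Real.rpow_nonneg hv α)
  calc (l * u ^ α + (1 - l) * v ^ α) ^ (1 / α)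
      ≤ (l * u ^ α) ^ (1 / α) := Real.rpow_le_rpow_of_nonpos (by positivity) (by linarith)
        (one_div_neg.2 hα).le
    _ = l ^ (1 / α) * u := by
        rw [Real.mul_rpow hl₀.le (by positivity), one_div, Real.rpow_rpow_inv hu hα.ne]

theorem alphaMean_le_iSup {E : Type*} [AddCommGroup E] [Module ℝ E] (hα : α < 0) (hl₀ : 0 < l)
    (hl₁ : l < 1) {f g : E → ℝ} (hf : ∀ x, 0 ≤ f x) (hg : ∀ x, 0 ≤ g x)
    (hf' : BddAbove (Set.range f)) (x y : E) :
    alphaMean α l (f x) (g y) ≤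
      ⨆ z, alphaMean α l (f (l⁻¹ • z)) (g ((1 - l)⁻¹ • (l • x + (1 - l) • y - z))) := by
  obtain ⟨B, hB⟩ := hf'
  have bdd : BddAbove (Set.range fun z ↦
      alphaMean α l (f (l⁻¹ • z)) (g ((1 - l)⁻¹ • (l • x + (1 - l) • y - z)))) := by
    refine ⟨l ^ (1 / α) * B, ?_⟩
    rintro _ ⟨z, rfl⟩
    exact (alphaMean_le hα hl₀ hl₁ (hf _) (hg _)).trans
      (mul_le_mul_of_nonneg_left (hB ⟨_, rfl⟩) (by positivity))
  refine le_ciSup_of_le bdd (l • x) ?_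
  rw [add_sub_cancel_left, inv_smul_smul₀ hl₀.ne', inv_smul_smul₀ (sub_pos.2 hl₁).ne']

end AlphaMean

theorem exists_pos_measure_superlevel_pos {X : Type*} [MeasurableSpace X] {μ : Measure X}
    {f : X → ℝ} (hf : ∀ x, 0 ≤ f x) (hf' : 0 < ∫ x, f x ∂μ) :
    ∃ c > 0, 0 < μ {x | c ≤ f x} := by
  have support_pos : 0 < μ (Function.support f) :=
    (integral_pos_iff_support_of_nonneg hf (.of_integral_ne_zero hf'.ne')).1 hf'
  have support_subset : Function.support f ⊆ ⋃ k : ℕ, {x | 1 / ((k : ℝ) + 1) ≤ f x} := by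
    intro x hx
    obtain ⟨k, hk⟩ := exists_nat_one_div_lt ((hf x).lt_of_ne' hx)
    exact Set.mem_iUnion.2 ⟨k, hk.le⟩
  obtain ⟨k, hk⟩ := exists_measure_pos_of_not_measure_iUnion_null
    (support_pos.trans_le (measure_mono support_subset)).ne'
  exact ⟨_, Nat.one_div_pos_of_nat, hk⟩

namespace AlphaConcave

variable {n : ℕ} {α c : ℝ} {f : EuclideanSpace ℝ (Fin n) → ℝ} {x : EuclideanSpace ℝ (Fin n)}

theorem two_rpow_mul_le_homothety (hf : AlphaConcave n α f) (hα : α < 0) (hc : 0 < c)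
    (hx : c < f x) {w : EuclideanSpace ℝ (Fin n)} (hw : c ≤ f w) :
    2 ^ (1 / α) * f x ≤ f (AffineMap.homothety x ((f x / c) ^ α) w) := by
  have hx₀ : 0 < f x := hc.trans hx
  set s := (f x / c) ^ α with hs
  have hs₀ : 0 < s := by positivity
  have hs₁ : s < 1 := Real.rpow_lt_one_of_one_lt_of_neg ((one_lt_div hc).2 hx) hα
  have hsc : s * c ^ α = f x ^ α := by
    rw [hs, ← Real.mul_rpow (by positivity) hc.le, div_mul_cancel₀ _ hc.ne']
  have mean_le : (1 - s) * f x ^ α + s * f w ^ α ≤ 2 * f x ^ α := by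
    have := mul_le_mul_of_nonneg_left (Real.rpow_le_rpow_of_nonpos hc hw hα.le) hs₀.le
    have : 0 ≤ s * f x ^ α := by positivity
    linarith
  calc 2 ^ (1 / α) * f x = (2 * f x ^ α) ^ (1 / α) := by
        rw [Real.mul_rpow zero_le_two (by positivity), one_div, Real.rpow_rpow_inv hx₀.le hα.ne]
    _ ≤ ((1 - s) * f x ^ α + s * f w ^ α) ^ (1 / α) := by
        have := Real.rpow_pos_of_pos hx₀ α
        have := Real.rpow_nonneg (hc.le.trans hw) α
        exact Real.rpow_le_rpow_of_nonpos
          (add_pos_of_pos_of_nonneg (mul_pos (sub_pos.2 hs₁) ‹_›) (by positivity)) mean_le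
          (one_div_neg.2 hα).le
    _ ≤ f ((1 - s) • x + s • w) := by
        simpa only [sub_sub_cancel] using
          hf.2 x w hx₀.ne' (hc.trans_le hw).ne' (1 - s) (by linarith) (by linarith)
    _ = f (AffineMap.homothety x s w) := by
        rw [AffineMap.homothety_eq_lineMap, AffineMap.lineMap_apply_module]

theorem mul_measureReal_superlevel_le_integral (hf : AlphaConcave n α f) (hα : α < 0)
    (hf₀ : ∀ x, 0 ≤ f x) (hfi : Integrable f) (hc : 0 < c) (hx : c < f x) :
    2 ^ (1 / α) * f x * (((f x / c) ^ α) ^ n * volume.real {w | c ≤ f w}) ≤ ∫ x, f x := by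
  have hx₀ : 0 < f x := hc.trans hx
  set s := (f x / c) ^ α
  have hs : 0 ≤ s := by positivity
  have image_subset : AffineMap.homothety x s '' {w | c ≤ f w} ⊆
      {z | 2 ^ (1 / α) * f x ≤ f z} := by
    rintro _ ⟨w, hw, rfl⟩
    exact hf.two_rpow_mul_le_homothety hα hc hx hw
  calc 2 ^ (1 / α) * f x * (s ^ n * volume.real {w | c ≤ f w})
      = 2 ^ (1 / α) * f x * volume.real (AffineMap.homothety x s '' {w | c ≤ f w}) := by
        simp [Measure.real, Measure.addHaar_image_homothety, abs_of_nonneg hs, pow_nonneg hs n]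
    _ ≤ 2 ^ (1 / α) * f x * volume.real {z | 2 ^ (1 / α) * f x ≤ f z} := by
        gcongr
        exact (hfi.measure_ge_lt_top (by positivity)).ne
    _ ≤ ∫ x, f x := mul_meas_ge_le_integral_of_nonneg (.of_forall hf₀) hfi _

theorem bddAbove_range (hf : AlphaConcave n α f) (hα : α < 0) (hnα : 0 < 1 + n * α)
    (hf₀ : ∀ x, 0 ≤ f x) (hfi : 0 < ∫ x, f x) : BddAbove (Set.range f) := by
  have hint : Integrable f := .of_integral_ne_zero hfi.ne'
  obtain ⟨c, hc, hcf⟩ := exists_pos_measure_superlevel_pos hf₀ hfi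
  have hW : 0 < volume.real {w | c ≤ f w} :=
    ENNReal.toReal_pos hcf.ne' (hint.measure_ge_lt_top hc).ne
  set K := 2 ^ (1 / α) * c * volume.real {w | c ≤ f w}
  have hK : 0 < K := by positivity
  have ratio_le {x : EuclideanSpace ℝ (Fin n)} (hx : c < f x) :
      (f x / c) ^ (1 + n * α) ≤ (∫ x, f x) / K := by
    have hr : 0 < f x / c := div_pos (hc.trans hx) hc
    refine (le_div_iff₀ hK).2 (le_of_eq_of_le ?_
      (hf.mul_measureReal_superlevel_le_integral hα hf₀ hint hc hx))
    rw [Real.rpow_add hr, Real.rpow_one, mul_comm (n : ℝ), Real.rpow_mul_natCast hr.le]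
    simp only [K]
    field_simp
  refine ⟨c * max 1 (((∫ x, f x) / K) ^ (1 + n * α)⁻¹), ?_⟩
  rintro _ ⟨x, rfl⟩
  rcases le_or_gt (f x) c with hx | hx
  · exact hx.trans (le_mul_of_one_le_right hc.le (le_max_left _ _))
  · rw [← div_le_iff₀' hc]
    exact ((Real.le_rpow_inv_iff_of_pos (div_pos (hc.trans hx) hc).le (by positivity) hnα).2
      (ratio_le hx)).trans (le_max_right _ _)

end AlphaConcave

theorem stmt_11_general {E : Type*} [NormedAddCommGroup E] [NormedSpace ℝ E]
    [FiniteDimensional ℝ E] [MeasurableSpace E] [BorelSpace E] (μ : Measure E)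
    [μ.IsAddHaarMeasure] (α κ : ℝ) (hα₁ : 0 < 1 + Module.finrank ℝ E * α) (hα₂ : α < 0)
    (hκ : κ = α / (1 + Module.finrank ℝ E * α)) (l : ℝ) (hl₀ : 0 < l) (hl₁ : l < 1)
    (f g h : E → ℝ) (hf : ∀ x, 0 ≤ f x) (hg : ∀ x, 0 ≤ g x)
    (hf₀ : 0 < ∫ x, f x ∂μ) (hg₀ : 0 < ∫ x, g x ∂μ)
    (hh : ∀ x y, alphaMean α l (f x) (g y) ≤ h (l • x + (1 - l) • y)) :
    ENNReal.ofReal ((l * (∫ x, f x ∂μ) ^ κ + (1 - l) * (∫ x, g x ∂μ) ^ κ) ^ (1 / κ)) ≤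
      ∫⁻ x, ENNReal.ofReal (h x) ∂μ := by
  have hl : 0 < 1 - l := sub_pos.2 hl₁
  have lintegral_eq {φ : E → ℝ} (hφ : ∀ x, 0 ≤ φ x) (hφ₀ : 0 < ∫ x, φ x ∂μ) :
      ∫⁻ x, (φ x).toNNReal ∂μ = .ofReal (∫ x, φ x ∂μ) :=
    (ofReal_integral_eq_lintegral_ofReal (.of_integral_ne_zero hφ₀.ne') (.of_forall hφ)).symm
  have key := powerMean_lintegral_le μ hl₀ hl hα₂ hα₁ (f := fun x ↦ (f x).toNNReal)
    (g := fun x ↦ (g x).toNNReal) (h := fun x ↦ .ofReal (h x))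
    (by rw [lintegral_eq hf hf₀]; exact ENNReal.ofReal_ne_top)
    (by rw [lintegral_eq hg hg₀]; exact ENNReal.ofReal_ne_top) fun x y ↦
      (ofReal_alphaMean hα₂ hl₀ hl₁ (hf x) (hg y)).symm.trans_le (ENNReal.ofReal_le_ofReal (hh x y))
  rwa [lintegral_eq hf hf₀, lintegral_eq hg hg₀, powerMean_ofReal hl₀ hl hf₀ hg₀, ← hκ,
    ← one_div] at key

theorem stmt_11 {n : ℕ} (hn : 1 ≤ n) (α κ : ℝ) (hα1 : -1 / (n : ℝ) < α) (hα2 : α < 0)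
    (hκ : κ = α / (1 + n * α)) (l : ℝ) (hl0 : 0 < l) (hl1 : l < 1)
    (f g : EuclideanSpace ℝ (Fin n) → ℝ) (hf : f ∈ CAlpha n α) (hg : g ∈ CAlpha n α)
    (hfi : Integrable f) (hgi : Integrable g)
    (hf0 : 0 < ∫ x, f x) (hg0 : 0 < ∫ x, g x)
    (h : EuclideanSpace ℝ (Fin n) → ℝ)
    (hdef : ∀ x, h x = ⨆ y : EuclideanSpace ℝ (Fin n),
      alphaMean α l (f (l⁻¹ • y)) (g ((1 - l)⁻¹ • (x - y)))) :
    ENNReal.ofReal ((l * (∫ x, f x) ^ κ + (1 - l) * (∫ x, g x) ^ κ) ^ (1 / κ)) ≤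
      ∫⁻ x, ENNReal.ofReal (h x) := by
  have hnα : 0 < 1 + n * α := by
    have := (div_lt_iff₀ (Nat.cast_pos.2 hn)).1 hα1
    linarith
  have hf_bdd : BddAbove (Set.range f) := hf.2.2.2.bddAbove_range hα2 hnα hf.1 hf0
  refine stmt_11_general volume α κ (by simpa using hnα) hα2 (by simpa using hκ) l hl0 hl1 f g h
    hf.1 hg.1 hf0 hg0 fun x y ↦ ?_
  rw [hdef]
  exact alphaMean_le_iSup hα2 hl0 hl1 hf.1 hg.1 hf_bdd x y
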